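/- For every positive integer K, s(5, K, 2) = K if K ≡ 0 (mod 10), s(5, K, 2) = K + 1 if K ≡ 9 (mod 10), and s(5, K, 2) = K + 2 otherwise. -/

import Mathlib

open scoped Classical

/-- A placement delivery array with parameters `(F, K, Z)` over alphabet `S`:
an `F × K` array of cells that are either empty (`none`) or an element of `S`,
such that each column has exactly `Z` empty cells, no element occurs twice in a
row or in a column, and two equal entries in positions `(j₁,k₁)`, `(j₂,k₂)`
force the cells `(j₁,k₂)` and `(j₂,k₁)` to be empty. -/
def IsPDA {S : Type} (F K Z : ℕ) (A : Fin F → Fin K → Option S) : Prop :=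
  (∀ k : Fin K, (Finset.univ.filter fun j : Fin F => A j k = none).card = Z) ∧
  (∀ (j : Fin F) (k₁ k₂ : Fin K) (t : S), A j k₁ = some t → A j k₂ = some t → k₁ = k₂) ∧
  (∀ (j₁ j₂ : Fin F) (k : Fin K) (t : S), A j₁ k = some t → A j₂ k = some t → j₁ = j₂) ∧
  (∀ (j₁ j₂ : Fin F) (k₁ k₂ : Fin K) (t : S), j₁ ≠ j₂ → k₁ ≠ k₂ →
      A j₁ k₁ = some t → A j₂ k₂ = some t → A j₁ k₂ = none ∧ A j₂ k₁ = none)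

/-- `sPDA F K Z` is the minimum size of an alphabet `S` for which an `S`-PDA with
parameters `(F, K, Z)` exists. -/
noncomputable def sPDA (F K Z : ℕ) : ℕ :=
  sInf {n : ℕ | ∃ A : Fin F → Fin K → Option (Fin n), IsPDA F K Z A}

/-!
Call the set of empty rows of a column its type, a pair of rows. A symbol occurs in at most three
rows, and if it occurs in exactly three rows `T`, then its cells lie in columns of the three types
`E ⊆ T`, one in each. Counting the `3K` nonempty cells gives `K ≤ n` for an alphabet of size `n`.

Let `f E` be the number of columns of type `E` and `x T` the number of symbols with set of rows `T`,
so that `x T ≤ f E` whenever `E ⊂ T`. If `n ≤ K + 1`, then `∑ f ≤ ∑ x + 2`, where both sums are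
computed level by level: for every `s` the triples with `x > s` are triangles of the graph formed by
the pairs with `f > s`, and a graph on five vertices has at least as many edges as triangles (local
LYM inequality). At the level `s = min f` the graph is not complete and has at most two edges more
than triangles. It is then empty, which means `K = 10 min f`, or complete minus an edge, which means
`K = 10 min f + 9` and `n = K + 1`, or it has an isolated vertex. In the last case an isolated
vertex `v` forces a symbol with fewer than three rows into row `v`, and another occurrence of that
symbol produces a triple with `x < min f`; there is room for one such triple only, which leads to
a contradiction.

Conversely, the array with one column of each type and the triples as symbols is a PDA with ten
columns and ten symbols, and copies of it are appended to PDAs with at most nine columns.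
-/

open Finset
open scoped FinsetFamily

/-! ### Superlevels of weights on subsets -/

section Superlevel

variable {α : Type*} [Fintype α] {f x : Finset α → ℕ} {r s m : ℕ}

/-- The `r`-subsets of `α` at which the weight `f` exceeds `s`. Weights on sets of a fixed size are
analysed one superlevel at a time. -/
def superlevel (f : Finset α → ℕ) (r s : ℕ) : Finset (Finset α) :=
  {E ∈ powersetCard r univ | s < f E}

lemma mem_superlevel {E : Finset α} : E ∈ superlevel f r s ↔ #E = r ∧ s < f E := by
  simp [superlevel, mem_powersetCard]

lemma superlevel_subset : superlevel f r s ⊆ powersetCard r univ := filter_subset _ _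

lemma superlevel_anti {s₁ s₂ : ℕ} (hs : s₁ ≤ s₂) : superlevel f r s₂ ⊆ superlevel f r s₁ :=
  monotone_filter_right _ fun _ _ hlt => hs.trans_lt hlt

lemma sum_card_superlevel {N : ℕ} (hN : ∀ E, f E ≤ N) :
    ∑ s ∈ range N, #(superlevel f r s) = ∑ E ∈ powersetCard r univ, f E := by
  simp_rw [superlevel, card_filter]
  rw [sum_comm]
  refine sum_congr rfl fun E _ => ?_
  have levels_below : {s ∈ range N | s < f E} = range (f E) := by
    ext s
    simpa using fun hs => hs.trans_le (hN E)
  rw [← card_filter, levels_below, card_range]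

lemma sum_eq_of_superlevel_succ_eq_empty (hm : ∀ E, #E = r → m ≤ f E)
    (htop : superlevel f r (m + 1) = ∅) :
    ∑ E ∈ powersetCard r univ, f E =
      (Fintype.card α).choose r * m + #(superlevel f r m) := by
  have value : ∀ E ∈ powersetCard r univ, f E = m + if m < f E then 1 else 0 := by
    intro E hE
    have hcard := (mem_powersetCard.1 hE).2
    have lower := hm E hcard
    have upper : ¬ m + 1 < f E := fun hlt =>
      notMem_empty E (htop ▸ mem_superlevel.2 ⟨hcard, hlt⟩)
    split_ifs <;> omega
  rw [sum_congr rfl value, sum_add_distrib, ← card_filter]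
  simp [superlevel]

variable [DecidableEq α]

lemma shadow_superlevel_subset (hxf : ∀ E j, #E = r → j ∉ E → x (insert j E) ≤ f E) :
    ∂ (superlevel x (r + 1) s) ⊆ superlevel f r s := by
  intro E hE
  obtain ⟨j, hj, hmem⟩ := mem_shadow_iff_insert_mem.1 hE
  obtain ⟨hcard, hlt⟩ := mem_superlevel.1 hmem
  have hEr : #E = r := by simpa [card_insert_of_notMem hj] using hcard
  exact mem_superlevel.2 ⟨hEr, hlt.trans_le (hxf E j hEr hj)⟩

lemma card_superlevel_succ_le (hα : Fintype.card α ≤ 2 * r + 1)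
    (hxf : ∀ E j, #E = r → j ∉ E → x (insert j E) ≤ f E) (s : ℕ) :
    #(superlevel x (r + 1) s) ≤ #(superlevel f r s) := by
  have sized : Set.Sized (r + 1) (superlevel x (r + 1) s : Set (Finset α)) :=
    fun T hT => (mem_superlevel.1 hT).1
  refine le_of_mul_le_mul_right ?_ r.succ_pos
  calc #(superlevel x (r + 1) s) * (r + 1)
      ≤ #(∂ (superlevel x (r + 1) s)) * (Fintype.card α - (r + 1) + 1) :=
        local_lubell_yamamoto_meshalkin_inequality_mul sized
    _ ≤ #(superlevel f r s) * (r + 1) :=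
        Nat.mul_le_mul (card_le_card (shadow_superlevel_subset hxf)) (by omega)

lemma sum_card_superlevel_add_sum_le (hα : Fintype.card α ≤ 2 * r + 1)
    (hxf : ∀ E j, #E = r → j ∉ E → x (insert j E) ≤ f E) (L : Finset ℕ) :
    ∑ s ∈ L, #(superlevel f r s) + ∑ T ∈ powersetCard (r + 1) univ, x T ≤
      ∑ s ∈ L, #(superlevel x (r + 1) s) + ∑ E ∈ powersetCard r univ, f E := by
  obtain ⟨N, hN⟩ : ∃ N, (∀ E, f E ≤ N) ∧ (∀ T, x T ≤ N) ∧ L ⊆ range N := by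
    refine ⟨univ.sup f + univ.sup x + (L.sup id + 1), fun E => ?_, fun T => ?_, fun s hs => ?_⟩
    · linarith [le_sup (f := f) (mem_univ E)]
    · linarith [le_sup (f := x) (mem_univ T)]
    · have := le_sup (f := id) hs
      simp only [id_eq] at this
      rw [mem_range]
      omega
  obtain ⟨hfN, hxN, hL⟩ := hN
  rw [← sum_card_superlevel hfN, ← sum_card_superlevel hxN, ← sum_sdiff hL, ← sum_sdiff hL]
  have other_levels := sum_le_sum fun s (_ : s ∈ range N \ L) =>
    card_superlevel_succ_le hα hxf s
  omega

/-- Besides the level `m`, this uses the level just below it, which contains every `r`-set. -/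
lemma card_superlevel_add_card_lt_add_sum_le (hα : Fintype.card α = 2 * r + 1)
    (hxf : ∀ E j, #E = r → j ∉ E → x (insert j E) ≤ f E) (hm : ∀ E, #E = r → m ≤ f E) :
    #(superlevel f r m) + #{T ∈ powersetCard (r + 1) univ | x T < m} +
        ∑ T ∈ powersetCard (r + 1) univ, x T ≤
      #(superlevel x (r + 1) m) + ∑ E ∈ powersetCard r univ, f E := by
  rcases m with _ | m
  · simpa using sum_card_superlevel_add_sum_le hα.le hxf {0}
  have two_levels := sum_card_superlevel_add_sum_le hα.le hxf {m, m + 1}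
  have all_sets : superlevel f r m = powersetCard r univ :=
    filter_true_of_mem fun E hE => hm E (mem_powersetCard.1 hE).2
  have split_sets : #(superlevel x (r + 1) m) + #{T ∈ powersetCard (r + 1) univ | x T < m + 1} =
      (Fintype.card α).choose (r + 1) := by
    rw [← card_univ, ← card_powersetCard,
      ← card_filter_add_card_filter_not (s := powersetCard (r + 1) univ) (fun T => m < x T)]
    simp only [superlevel, not_lt, Nat.lt_succ_iff]
  have middle_binomials : (Fintype.card α).choose (r + 1) = (Fintype.card α).choose r := by
    rw [hα, ← Nat.choose_symm_half r]
  rw [sum_pair (by omega), sum_pair (by omega), all_sets, card_powersetCard, card_univ]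
    at two_levels
  omega

end Superlevel

/-! ### Graphs on five vertices -/

section FiveVertices

/-- The edges of the complete graph on `Fin 5`, enumerated so that graphs become
functions `Fin 10 → Bool`. -/
def edge : Fin 10 ↪ Finset (Fin 5) :=
  ⟨![{0, 1}, {0, 2}, {0, 3}, {0, 4}, {1, 2}, {1, 3}, {1, 4}, {2, 3}, {2, 4}, {3, 4}], by decide⟩

/-- The triangles of the graph on `Fin 5` whose edges are selected by `b`. -/
def triangles (b : Fin 10 → Bool) : Finset (Finset (Fin 5)) :=
  {T ∈ powersetCard 3 univ | ∀ i, edge i ⊆ T → b i = true}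

-- The graphs with at most two more edges than triangles are, up to isomorphism, the empty graph,
-- one edge, two edges, a triangle, `K₄`, `K₅` minus an edge, and `K₅`.
lemma card_edges_vs_card_triangles : ∀ b : Fin 10 → Bool,
    (∀ i, b i = false) ∨ (∀ i, b i = true) ∨
      #(triangles b) < #{i | b i = true} ∧
      (#{i | b i = true} ≤ #(triangles b) + 1 → #{i | b i = true} = 1) ∧
      (#{i | b i = true} ≤ #(triangles b) + 2 →
        #{i | b i = true} = 9 ∨ ∃ v, ∀ i, b i = true → v ∉ edge i) := by
  decide +kernel

lemma exists_edge_eq : ∀ E ∈ powersetCard 2 (univ : Finset (Fin 5)), ∃ i, edge i = E := by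
  decide

lemma card_edge : ∀ i, #(edge i) = 2 := by decide

lemma card_shadow_alternatives {H N : Finset (Finset (Fin 5))} (hH : H ⊆ powersetCard 2 univ)
    (hN : N ⊆ powersetCard 3 univ) (hNH : ∂ N ⊆ H) (hne : H.Nonempty)
    (hproper : H ≠ powersetCard 2 univ) :
    #N < #H ∧ (#H ≤ #N + 1 → #H = 1) ∧
      (#H ≤ #N + 2 → #H = 9 ∨ ∃ v, ∀ E ∈ H, v ∉ E) := by
  set b : Fin 10 → Bool := fun i => decide (edge i ∈ H) with hb
  have H_eq : H = ({i | b i = true} : Finset (Fin 10)).map edge := by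
    ext E
    simp only [hb, decide_eq_true_eq, mem_map, mem_filter, mem_univ, true_and]
    refine ⟨fun hE => ?_, fun ⟨_, hi, hiE⟩ => hiE ▸ hi⟩
    obtain ⟨i, rfl⟩ := exists_edge_eq E (hH hE)
    exact ⟨i, hE, rfl⟩
  have card_H : #{i | b i = true} = #H := by rw [H_eq, card_map]
  have N_subset : N ⊆ triangles b := by
    intro T hT
    refine mem_filter.2 ⟨hN hT, fun i hi => decide_eq_true (hNH ?_)⟩
    refine mem_shadow_iff_exists_mem_card_add_one.2 ⟨T, hT, hi, ?_⟩
    rw [card_edge, (mem_powersetCard.1 (hN hT)).2]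
  have card_N := card_le_card N_subset
  rcases card_edges_vs_card_triangles b with none_selected | all_selected | ⟨hlt, hone, htwo⟩
  · obtain ⟨E, hE⟩ := hne
    obtain ⟨i, rfl⟩ := exists_edge_eq E (hH hE)
    exact absurd hE (of_decide_eq_false (none_selected i))
  · refine absurd (hH.antisymm fun E hE => ?_) hproper
    obtain ⟨i, rfl⟩ := exists_edge_eq E hE
    exact of_decide_eq_true (all_selected i)
  · rw [card_H] at hlt hone htwo
    refine ⟨by omega, fun h => hone (by omega), fun h => (htwo (by omega)).imp_right ?_⟩
    rintro ⟨v, hv⟩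
    refine ⟨v, fun E hE => ?_⟩
    obtain ⟨i, rfl⟩ := exists_edge_eq E (hH hE)
    exact hv i (decide_eq_true hE)

end FiveVertices

/-! ### Column types and symbol counts -/

section Counting

variable {F K Z m : ℕ} {S : Type} {A : Fin F → Fin K → Option S}
  {E : Finset (Fin F)} {j j₁ j₂ v : Fin F} {k k₁ k₂ : Fin K} {t : S}

/-- The set of rows in which column `k` is empty; it is called the type of the column. -/
def emptyRows (A : Fin F → Fin K → Option S) (k : Fin K) : Finset (Fin F) :=
  {j | A j k = none}

/-- The set of rows in which the symbol `t` occurs. -/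
noncomputable def symbolRows (A : Fin F → Fin K → Option S) (t : S) : Finset (Fin F) :=
  {j | ∃ k, A j k = some t}

/-- The number of columns of type `E`. -/
def columnCount (A : Fin F → Fin K → Option S) (E : Finset (Fin F)) : ℕ :=
  #{k | emptyRows A k = E}

/-- The number of symbols whose set of rows is exactly `T`; used for `T` of the largest possible
size `Z + 1`. -/
noncomputable def symbolCount [Fintype S] (A : Fin F → Fin K → Option S) (T : Finset (Fin F)) : ℕ :=
  #{t | symbolRows A t = T}

/-- The symbols occurring in at most `Z` rows, one fewer than the maximum in an `(F, K, Z)`-PDA. -/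
noncomputable def deficientSymbols [Fintype S] (Z : ℕ) (A : Fin F → Fin K → Option S) : Finset S :=
  {t | #(symbolRows A t) ≤ Z}

lemma mem_emptyRows : j ∈ emptyRows A k ↔ A j k = none := by simp [emptyRows]

lemma mem_symbolRows : j ∈ symbolRows A t ↔ ∃ k, A j k = some t := by simp [symbolRows]

lemma mem_deficientSymbols [Fintype S] : t ∈ deficientSymbols Z A ↔ #(symbolRows A t) ≤ Z := by
  simp [deficientSymbols]

lemma notMem_emptyRows (ht : A j k = some t) : j ∉ emptyRows A k := by
  simp [mem_emptyRows, ht]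

lemma exists_eq_some_of_notMem_emptyRows (hj : j ∉ emptyRows A k) : ∃ t, A j k = some t :=
  Option.ne_none_iff_exists'.1 (mt mem_emptyRows.2 hj)

theorem isPDA_iff : IsPDA F K Z A ↔ (∀ k, #(emptyRows A k) = Z) ∧
    ∀ j₁ k₁ j₂ k₂ t, A j₁ k₁ = some t → A j₂ k₂ = some t →
      (j₁ = j₂ ∧ k₁ = k₂) ∨ (A j₁ k₂ = none ∧ A j₂ k₁ = none) := by
  refine ⟨fun ⟨hZ, hrow, hcol, hcross⟩ => ⟨hZ, fun j₁ k₁ j₂ k₂ t h₁ h₂ => ?_⟩,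
    fun ⟨hZ, hcross⟩ => ⟨hZ, fun j k₁ k₂ t h₁ h₂ => ?_, fun j₁ j₂ k t h₁ h₂ => ?_,
      fun j₁ j₂ k₁ k₂ t hj _ h₁ h₂ => ?_⟩⟩
  · by_cases hj : j₁ = j₂
    · subst hj
      exact .inl ⟨rfl, hrow _ _ _ _ h₁ h₂⟩
    · refine .inr (hcross _ _ _ _ _ hj ?_ h₁ h₂)
      rintro rfl
      exact hj (hcol _ _ _ _ h₁ h₂)
  · simpa [h₁, h₂] using hcross _ _ _ _ _ h₁ h₂
  · simpa [h₁, h₂] using hcross _ _ _ _ _ h₁ h₂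
  · exact (hcross _ _ _ _ _ h₁ h₂).resolve_left fun h => hj h.1

namespace IsPDA

lemma card_emptyRows (h : IsPDA F K Z A) (k : Fin K) : #(emptyRows A k) = Z := h.1 k

lemma column_eq (h : IsPDA F K Z A) (h₁ : A j k₁ = some t) (h₂ : A j k₂ = some t) : k₁ = k₂ :=
  h.2.1 _ _ _ _ h₁ h₂

lemma mem_emptyRows_of_ne (h : IsPDA F K Z A) (h₁ : A j₁ k₁ = some t) (h₂ : A j₂ k₂ = some t)
    (hj : j₁ ≠ j₂) : j₁ ∈ emptyRows A k₂ ∧ j₂ ∈ emptyRows A k₁ := by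
  simp only [mem_emptyRows]
  exact ((isPDA_iff.1 h).2 _ _ _ _ _ h₁ h₂).resolve_left fun e => hj e.1

lemma symbolRows_subset (h : IsPDA F K Z A) (ht : A j k = some t) :
    symbolRows A t ⊆ insert j (emptyRows A k) := by
  intro i hi
  obtain ⟨k', hk'⟩ := mem_symbolRows.1 hi
  by_cases hij : i = j
  · exact hij ▸ mem_insert_self _ _
  · exact mem_insert_of_mem (h.mem_emptyRows_of_ne hk' ht hij).1

lemma card_insert_emptyRows (h : IsPDA F K Z A) (ht : A j k = some t) :
    #(insert j (emptyRows A k)) = Z + 1 := by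
  rw [card_insert_of_notMem (notMem_emptyRows ht), h.card_emptyRows]

lemma card_symbolRows_le (h : IsPDA F K Z A) (t : S) : #(symbolRows A t) ≤ Z + 1 := by
  rcases (symbolRows A t).eq_empty_or_nonempty with hempty | ⟨j, hj⟩
  · simp [hempty]
  · obtain ⟨k, hk⟩ := mem_symbolRows.1 hj
    exact (card_le_card (h.symbolRows_subset hk)).trans_eq (h.card_insert_emptyRows hk)

lemma sum_columnCount (h : IsPDA F K Z A) : ∑ E ∈ powersetCard Z univ, columnCount A E = K := by
  have types_card : Set.MapsTo (emptyRows A) (univ : Finset (Fin K))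
      (powersetCard Z univ : Finset (Finset (Fin F))) :=
    fun k _ => mem_powersetCard.2 ⟨subset_univ _, h.card_emptyRows k⟩
  simpa [columnCount] using (card_eq_sum_card_fiberwise types_card).symm

lemma exists_column_of_symbolRows_eq (h : IsPDA F K Z A) (hE : #E = Z) (hj : j ∉ E)
    (ht : symbolRows A t = insert j E) : ∃ k, emptyRows A k = E ∧ A j k = some t := by
  obtain ⟨k, hk⟩ := mem_symbolRows.1 (ht ▸ mem_insert_self j E)
  refine ⟨k, ?_, hk⟩
  have subset := h.symbolRows_subset hk
  rw [ht, insert_subset_insert_iff hj] at subset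
  exact (eq_of_subset_of_card_le subset (by rw [hE, h.card_emptyRows])).symm

variable [Fintype S]

lemma card_symbolRows_of_notMem (h : IsPDA F K Z A) (ht : t ∉ deficientSymbols Z A) :
    #(symbolRows A t) = Z + 1 := by
  have := h.card_symbolRows_le t
  rw [mem_deficientSymbols] at ht
  omega

lemma symbolRows_eq_insert (h : IsPDA F K Z A) (ht : A j k = some t)
    (hfull : t ∉ deficientSymbols Z A) : symbolRows A t = insert j (emptyRows A k) :=
  eq_of_subset_of_card_le (h.symbolRows_subset ht)
    (by rw [h.card_insert_emptyRows ht, h.card_symbolRows_of_notMem hfull])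

lemma card_symbols_row (h : IsPDA F K Z A) (j : Fin F) :
    #{t | j ∈ symbolRows A t} = #{k | j ∉ emptyRows A k} := by
  apply le_antisymm
  · refine card_le_card_of_forall_subsingleton (fun t k => A j k = some t) (fun t ht => ?_)
      fun k _ t ht t' ht' => Option.some_injective _ (ht.2.symm.trans ht'.2)
    obtain ⟨k, hk⟩ := mem_symbolRows.1 (mem_filter.1 ht).2
    exact ⟨k, mem_filter.2 ⟨mem_univ _, notMem_emptyRows hk⟩, hk⟩
  · refine card_le_card_of_forall_subsingleton (fun k t => A j k = some t) (fun k hk => ?_)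
      fun t _ k hk k' hk' => h.column_eq hk.2 hk'.2
    obtain ⟨t, ht⟩ := exists_eq_some_of_notMem_emptyRows (mem_filter.1 hk).2
    exact ⟨t, mem_filter.2 ⟨mem_univ _, mem_symbolRows.2 ⟨k, ht⟩⟩, ht⟩

lemma sum_card_symbolRows_add (h : IsPDA F K Z A) :
    ∑ t, #(symbolRows A t) + Z * K = F * K := by
  have nonempty_cells : ∑ t, #(symbolRows A t) = ∑ k, #(emptyRows A k)ᶜ := by
    calc ∑ t, #(symbolRows A t) = ∑ t, #{j | j ∈ symbolRows A t} := by simp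
      _ = ∑ j, #{t | j ∈ symbolRows A t} :=
        sum_card_bipartiteAbove_eq_sum_card_bipartiteBelow fun t j => j ∈ symbolRows A t
      _ = ∑ j, #{k | j ∉ emptyRows A k} := sum_congr rfl fun j _ => h.card_symbols_row j
      _ = ∑ k, #{j | j ∉ emptyRows A k} :=
        sum_card_bipartiteAbove_eq_sum_card_bipartiteBelow fun j k => j ∉ emptyRows A k
      _ = ∑ k, #(emptyRows A k)ᶜ := by simp only [compl_eq_univ_sdiff, filter_notMem_eq_sdiff]
  have empty_cells : ∑ k, #(emptyRows A k) = Z * K := by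
    simp [h.card_emptyRows, mul_comm]
  rw [nonempty_cells, ← empty_cells, ← sum_add_distrib]
  simp [card_compl_add_card, mul_comm]

lemma sum_symbolCount (h : IsPDA F K Z A) :
    ∑ T ∈ powersetCard (Z + 1) univ, symbolCount A T = #(deficientSymbols Z A)ᶜ := by
  have rows_card : Set.MapsTo (symbolRows A) ((deficientSymbols Z A)ᶜ : Finset S)
      (powersetCard (Z + 1) univ : Finset (Finset (Fin F))) := fun t ht =>
    mem_powersetCard.2 ⟨subset_univ _, h.card_symbolRows_of_notMem (mem_compl.1 ht)⟩
  rw [card_eq_sum_card_fiberwise rows_card]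
  refine sum_congr rfl fun T hT => congrArg card ?_
  ext t
  simp only [mem_filter, mem_univ, true_and, mem_compl, mem_deficientSymbols]
  refine ⟨fun ht => ⟨?_, ht⟩, And.right⟩
  rw [ht, (mem_powersetCard.1 hT).2]
  omega

lemma sum_symbolCount_add_card (h : IsPDA F K Z A) :
    ∑ T ∈ powersetCard (Z + 1) univ, symbolCount A T + #(deficientSymbols Z A) =
      Fintype.card S := by
  rw [h.sum_symbolCount, card_compl_add_card]

lemma sum_card_deficient_add (h : IsPDA F K Z A) :
    ∑ t ∈ deficientSymbols Z A, #(symbolRows A t) +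
      (Z + 1) * ∑ T ∈ powersetCard (Z + 1) univ, symbolCount A T + Z * K = F * K := by
  have full_rows : ∑ t ∈ (deficientSymbols Z A)ᶜ, #(symbolRows A t) =
      (Z + 1) * #(deficientSymbols Z A)ᶜ := by
    rw [sum_congr rfl fun t ht => h.card_symbolRows_of_notMem (mem_compl.1 ht), sum_const,
      smul_eq_mul, mul_comm]
  rw [h.sum_symbolCount, ← full_rows, sum_add_sum_compl, h.sum_card_symbolRows_add]

lemma symbolCount_insert_le (h : IsPDA F K Z A) (hE : #E = Z) (hj : j ∉ E) :
    symbolCount A (insert j E) ≤ columnCount A E := by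
  refine card_le_card_of_forall_subsingleton (fun t k => A j k = some t) (fun t ht => ?_)
    fun k _ t ht t' ht' => Option.some_injective _ (ht.2.symm.trans ht'.2)
  obtain ⟨k, hkE, hk⟩ := h.exists_column_of_symbolRows_eq hE hj (mem_filter.1 ht).2
  exact ⟨k, mem_filter.2 ⟨mem_univ _, hkE⟩, hk⟩

lemma symbolCount_insert_lt (h : IsPDA F K Z A) (hk : A j k = some t)
    (ht : t ∈ deficientSymbols Z A) :
    symbolCount A (insert j (emptyRows A k)) < columnCount A (emptyRows A k) := by
  have hmem : k ∈ ({k' | emptyRows A k' = emptyRows A k} : Finset (Fin K)) := by simp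
  refine lt_of_le_of_lt ?_ (card_erase_lt_of_mem hmem)
  refine card_le_card_of_forall_subsingleton (fun t k => A j k = some t) (fun t' ht' => ?_)
    fun k _ t ht t' ht' => Option.some_injective _ (ht.2.symm.trans ht'.2)
  have rows_eq := (mem_filter.1 ht').2
  obtain ⟨k', hkE, hk'⟩ :=
    h.exists_column_of_symbolRows_eq (h.card_emptyRows k) (notMem_emptyRows hk) rows_eq
  refine ⟨k', mem_erase.2 ⟨?_, mem_filter.2 ⟨mem_univ _, hkE⟩⟩, hk'⟩
  rintro rfl
  obtain rfl : t = t' := Option.some_injective _ (hk.symm.trans hk')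
  have full := h.card_insert_emptyRows hk
  rw [← rows_eq] at full
  have := mem_deficientSymbols.1 ht
  omega

lemma exists_deficient_of_symbolCount_lt (h : IsPDA F K Z A) (hj : j ∉ E)
    (hlt : symbolCount A (insert j E) < columnCount A E) :
    ∃ k, ∃ t ∈ deficientSymbols Z A, emptyRows A k = E ∧ A j k = some t := by
  by_contra! all_full
  refine hlt.not_ge (card_le_card_of_forall_subsingleton (fun k t => A j k = some t)
    (fun k hk => ?_) fun t _ k hk k' hk' => h.column_eq hk.2 hk'.2)
  have hkE : emptyRows A k = E := (mem_filter.1 hk).2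
  obtain ⟨t, ht⟩ := exists_eq_some_of_notMem_emptyRows (hkE ▸ hj)
  have full : t ∉ deficientSymbols Z A := fun hdef => all_full k t hdef hkE ht
  exact ⟨t, mem_filter.2 ⟨mem_univ _, hkE ▸ h.symbolRows_eq_insert ht full⟩, ht⟩

-- Two cells with the same symbol never lie in columns of the same type.
lemma card_compl_le_card_deficient (h : IsPDA F K Z A)
    (hlt : ∀ j ∉ E, symbolCount A (insert j E) < columnCount A E) :
    #Eᶜ ≤ #(deficientSymbols Z A) := by
  refine card_le_card_of_forall_subsingleton
    (fun j t => ∃ k, emptyRows A k = E ∧ A j k = some t) (fun j hj => ?_) ?_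
  · obtain ⟨k, t, ht, hk⟩ :=
      h.exists_deficient_of_symbolCount_lt (mem_compl.1 hj) (hlt j (mem_compl.1 hj))
    exact ⟨t, ht, k, hk⟩
  · rintro t - i ⟨hi, k, -, hk⟩ j ⟨-, k', rfl, hk'⟩
    by_contra hij
    exact mem_compl.1 hi (h.mem_emptyRows_of_ne hk hk' hij).1

lemma succ_mul_add_card_deficient_le (h : IsPDA F K Z A) (hF : F = 2 * Z + 1) :
    (Z + 1) * K + #(deficientSymbols Z A) ≤ (Z + 1) * Fintype.card S := by
  have rows_le : ∑ t ∈ deficientSymbols Z A, #(symbolRows A t) ≤ #(deficientSymbols Z A) * Z :=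
    sum_le_card_nsmul _ _ _ fun t ht => mem_deficientSymbols.1 ht
  have cells := h.sum_card_deficient_add
  rw [← h.sum_symbolCount_add_card]
  subst hF
  linarith

lemma card_symbolRows_eq_of_mem_deficient (h : IsPDA F K Z A) (hF : F = 2 * Z + 1)
    (htight : (Z + 1) * Fintype.card S ≤ (Z + 1) * K + #(deficientSymbols Z A))
    (ht : t ∈ deficientSymbols Z A) : #(symbolRows A t) = Z := by
  have rows_le : ∀ t ∈ deficientSymbols Z A, #(symbolRows A t) ≤ Z := fun t ht =>
    mem_deficientSymbols.1 ht
  have cells := h.sum_card_deficient_add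
  rw [← h.sum_symbolCount_add_card] at htight
  subst hF
  refine (sum_eq_sum_iff_of_le rows_le).1 (le_antisymm (sum_le_sum rows_le) ?_) t ht
  rw [sum_const, smul_eq_mul]
  linarith

lemma symbolCount_insert_lt_of_isolated (h : IsPDA F K Z A) (hZ : 0 < Z)
    (hE : E ∈ superlevel (columnCount A) Z m)
    (hv : ∀ E' ∈ superlevel (columnCount A) Z m, v ∉ E') :
    symbolCount A (insert v E) < columnCount A E := by
  obtain ⟨hcard, hlt⟩ := mem_superlevel.1 hE
  obtain ⟨w, hw⟩ := card_pos.1 (hcard.symm ▸ hZ)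
  have hvE := hv E hE
  have hwv : w ≠ v := fun e => hvE (e ▸ hw)
  have card_swap : #(insert v (E.erase w)) = Z := by
    rw [card_insert_of_notMem (mt mem_of_mem_erase hvE), card_erase_add_one hw, hcard]
  have light : columnCount A (insert v (E.erase w)) ≤ m := by
    by_contra! hgt
    exact hv _ (mem_superlevel.2 ⟨card_swap, hgt⟩) (mem_insert_self _ _)
  calc symbolCount A (insert v E)
      = symbolCount A (insert w (insert v (E.erase w))) := by rw [insert_comm, insert_erase hw]
    _ ≤ columnCount A (insert v (E.erase w)) := h.symbolCount_insert_le card_swap (by simp [hwv])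
    _ ≤ m := light
    _ < columnCount A E := hlt

-- Row `v` has a deficient symbol in a column of type `E`; a second cell of that symbol lies in a
-- column whose type contains `v`, hence is light, and `T` is read off from that cell.
lemma exists_symbolCount_lt_of_isolated (h : IsPDA F K Z A) (hZ : 0 < Z)
    (hE : E ∈ superlevel (columnCount A) Z m)
    (hv : ∀ E' ∈ superlevel (columnCount A) Z m, v ∉ E')
    (hrows : ∀ t ∈ deficientSymbols Z A, 1 < #(symbolRows A t)) :
    ∃ T, #T = Z + 1 ∧ v ∈ T ∧ ¬ Disjoint T E ∧ symbolCount A T < m := by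
  obtain ⟨k, t, ht, rfl, hk⟩ := h.exists_deficient_of_symbolCount_lt (hv E hE)
    (h.symbolCount_insert_lt_of_isolated hZ hE hv)
  obtain ⟨j, hj, hjv⟩ := exists_mem_ne (hrows t ht) v
  obtain ⟨k', hk'⟩ := mem_symbolRows.1 hj
  obtain ⟨hvk', hjk⟩ := h.mem_emptyRows_of_ne hk hk' hjv.symm
  refine ⟨insert j (emptyRows A k'), h.card_insert_emptyRows hk', mem_insert_of_mem hvk',
    not_disjoint_iff.2 ⟨j, mem_insert_self _ _, hjk⟩,
    (h.symbolCount_insert_lt hk' ht).trans_le ?_⟩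
  by_contra! hgt
  exact hv _ (mem_superlevel.2 ⟨h.card_emptyRows k', hgt⟩) hvk'

end IsPDA

end Counting

/-! ### Small alphabets for five rows -/

section LowerBound

namespace IsPDA

variable {K m s : ℕ} {S : Type} [Fintype S] {A : Fin 5 → Fin K → Option S}
  {E E₀ : Finset (Fin 5)} {v : Fin 5}

lemma card_superlevel_alternatives (h : IsPDA 5 K 2 A) (hE₀ : #E₀ = 2)
    (hlight : columnCount A E₀ ≤ s) (hne : (superlevel (columnCount A) 2 s).Nonempty) :
    #(superlevel (symbolCount A) 3 s) < #(superlevel (columnCount A) 2 s) ∧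
    (#(superlevel (columnCount A) 2 s) ≤ #(superlevel (symbolCount A) 3 s) + 1 →
      #(superlevel (columnCount A) 2 s) = 1) ∧
    (#(superlevel (columnCount A) 2 s) ≤ #(superlevel (symbolCount A) 3 s) + 2 →
      #(superlevel (columnCount A) 2 s) = 9 ∨
        ∃ v, ∀ E ∈ superlevel (columnCount A) 2 s, v ∉ E) := by
  refine card_shadow_alternatives superlevel_subset superlevel_subset
    (shadow_superlevel_subset fun _ _ => h.symbolCount_insert_le) hne fun hall => ?_
  have hmem : E₀ ∈ superlevel (columnCount A) 2 s :=
    hall ▸ mem_powersetCard.2 ⟨subset_univ _, hE₀⟩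
  exact (mem_superlevel.1 hmem).2.not_ge hlight

lemma le_sum_symbolCount_add_two (h : IsPDA 5 K 2 A) (hS : Fintype.card S ≤ K + 1) :
    K ≤ ∑ T ∈ powersetCard 3 univ, symbolCount A T + 2 := by
  have weight := h.succ_mul_add_card_deficient_le rfl
  have total := h.sum_symbolCount_add_card
  norm_num only at total
  omega

lemma one_lt_card_symbolRows_of_three_le (h : IsPDA 5 K 2 A) (hS : Fintype.card S ≤ K + 1)
    (hthree : 3 ≤ #(deficientSymbols 2 A)) : ∀ t ∈ deficientSymbols 2 A, 1 < #(symbolRows A t) := by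
  intro t ht
  rw [h.card_symbolRows_eq_of_mem_deficient rfl (by omega) ht]
  exact one_lt_two

lemma card_superlevel_le_of_card_deficient_le_two (h : IsPDA 5 K 2 A)
    (hS : Fintype.card S ≤ K + 1) (htwo : #(deficientSymbols 2 A) ≤ 2) :
    #(superlevel (columnCount A) 2 s) ≤ #(superlevel (symbolCount A) 3 s) + 1 := by
  have level := sum_card_superlevel_add_sum_le (by simp)
    (fun _ _ => h.symbolCount_insert_le) {s}
  rw [h.sum_columnCount, sum_singleton, sum_singleton] at level
  have weight := h.succ_mul_add_card_deficient_le rfl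
  have total := h.sum_symbolCount_add_card
  norm_num only at level total
  omega

lemma card_superlevel_add_card_lt_le (h : IsPDA 5 K 2 A) (hS : Fintype.card S ≤ K + 1)
    (hm : ∀ E, #E = 2 → m ≤ columnCount A E) :
    #(superlevel (columnCount A) 2 m) + #{T ∈ powersetCard 3 univ | symbolCount A T < m} ≤
      #(superlevel (symbolCount A) 3 m) + 2 := by
  have levels := card_superlevel_add_card_lt_add_sum_le (by simp)
    (fun _ _ => h.symbolCount_insert_le) hm
  rw [h.sum_columnCount] at levels
  have := h.le_sum_symbolCount_add_two hS
  norm_num only at levels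
  omega

lemma card_superlevel_eq_one_of_isolated (h : IsPDA 5 K 2 A) (hS : Fintype.card S ≤ K + 1)
    (hE₀ : #E₀ = 2) (hlight : columnCount A E₀ ≤ m) (hm : ∀ E, #E = 2 → m ≤ columnCount A E)
    (hE : E ∈ superlevel (columnCount A) 2 m)
    (hv : ∀ E' ∈ superlevel (columnCount A) 2 m, v ∉ E') :
    #(superlevel (columnCount A) 2 m) = 1 := by
  refine (h.card_superlevel_alternatives hE₀ hlight ⟨E, hE⟩).2.1 ?_
  by_cases htwo : #(deficientSymbols 2 A) ≤ 2
  · exact h.card_superlevel_le_of_card_deficient_le_two hS htwo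
  · obtain ⟨T, hT, -, -, hlt⟩ := h.exists_symbolCount_lt_of_isolated two_pos hE hv
      (h.one_lt_card_symbolRows_of_three_le hS (by omega))
    have some_triple : 0 < #{T ∈ powersetCard 3 univ | symbolCount A T < m} :=
      card_pos.2 ⟨T, mem_filter.2 ⟨mem_powersetCard.2 ⟨subset_univ _, hT⟩, hlt⟩⟩
    have := h.card_superlevel_add_card_lt_le hS hm
    omega

-- The three rows outside the single heavy type `E` would all lie in the single triple `T` of
-- count less than `m`, which therefore is `Eᶜ`; but `T` meets `E`.
lemma card_superlevel_ne_one (h : IsPDA 5 K 2 A) (hS : Fintype.card S ≤ K + 1)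
    (hE₀ : #E₀ = 2) (hlight : columnCount A E₀ ≤ m) (hm : ∀ E, #E = 2 → m ≤ columnCount A E) :
    #(superlevel (columnCount A) 2 m) ≠ 1 := by
  intro hone
  obtain ⟨E, hH⟩ := card_eq_one.1 hone
  have hE : E ∈ superlevel (columnCount A) 2 m := hH ▸ mem_singleton_self E
  have isolated : ∀ v ∉ E, ∀ E' ∈ superlevel (columnCount A) 2 m, v ∉ E' := by
    intro v hv E' hE'
    rw [hH, mem_singleton] at hE'
    exact hE' ▸ hv
  have card_compl_E : #Eᶜ = 3 := by
    rw [card_compl, (mem_superlevel.1 hE).1, Fintype.card_fin]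
  have hthree : 3 ≤ #(deficientSymbols 2 A) := card_compl_E ▸
    h.card_compl_le_card_deficient fun v hv =>
      h.symbolCount_insert_lt_of_isolated two_pos hE (isolated v hv)
  choose! T card_T mem_T meets_T T_lt using fun v hv =>
    h.exists_symbolCount_lt_of_isolated two_pos hE (isolated v hv)
      (h.one_lt_card_symbolRows_of_three_le hS hthree)
  have card_lt_le_one : #{T ∈ powersetCard 3 univ | symbolCount A T < m} ≤ 1 := by
    have := h.card_superlevel_add_card_lt_le hS hm
    have := (h.card_superlevel_alternatives hE₀ hlight ⟨E, hE⟩).1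
    omega
  obtain ⟨u, hu⟩ := card_pos.1 (card_compl_E.symm ▸ three_pos)
  rw [mem_compl] at hu
  have T_eq : ∀ v ∉ E, T v = T u := fun v hv => card_le_one.1 card_lt_le_one _
    (by simp [card_T v hv, T_lt v hv, mem_powersetCard]) _
    (by simp [card_T u hu, T_lt u hu, mem_powersetCard])
  have compl_subset : Eᶜ ⊆ T u := fun v hv => T_eq v (mem_compl.1 hv) ▸ mem_T v (mem_compl.1 hv)
  have compl_eq : Eᶜ = T u :=
    eq_of_subset_of_card_le compl_subset (by rw [card_T u hu, card_compl_E])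
  exact meets_T u hu (compl_eq ▸ disjoint_compl_left)

lemma superlevel_eq_empty_or_card_eq_nine (h : IsPDA 5 K 2 A) (hS : Fintype.card S ≤ K + 1)
    (hE₀ : #E₀ = 2) (hlight : columnCount A E₀ ≤ m) (hm : ∀ E, #E = 2 → m ≤ columnCount A E) :
    superlevel (columnCount A) 2 m = ∅ ∨ #(superlevel (columnCount A) 2 m) = 9 := by
  refine (superlevel (columnCount A) 2 m).eq_empty_or_nonempty.imp_right fun ⟨E, hE⟩ => ?_
  have level := h.card_superlevel_add_card_lt_le hS hm
  refine ((h.card_superlevel_alternatives hE₀ hlight ⟨E, hE⟩).2.2 (by omega)).resolve_right ?_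
  rintro ⟨v, hv⟩
  exact h.card_superlevel_ne_one hS hE₀ hlight hm
    (h.card_superlevel_eq_one_of_isolated hS hE₀ hlight hm hE hv)

lemma card_superlevel_le_seven_of_card_eq_nine (h : IsPDA 5 K 2 A) (hE₀ : #E₀ = 2)
    (hlight : columnCount A E₀ ≤ s) (hnine : #(superlevel (columnCount A) 2 s) = 9) :
    #(superlevel (symbolCount A) 3 s) ≤ 7 := by
  have := (h.card_superlevel_alternatives hE₀ hlight (card_pos.1 (by omega))).2.1
  omega

lemma superlevel_succ_eq_empty_of_card_eq_nine (h : IsPDA 5 K 2 A) (hS : Fintype.card S ≤ K + 1)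
    (hE₀ : #E₀ = 2) (hlight : columnCount A E₀ ≤ s)
    (hnine : #(superlevel (columnCount A) 2 s) = 9) :
    superlevel (columnCount A) 2 (s + 1) = ∅ := by
  by_contra hne
  have lower_level := h.card_superlevel_le_seven_of_card_eq_nine hE₀ hlight hnine
  have upper_level := (h.card_superlevel_alternatives hE₀ (hlight.trans (s.le_add_right 1))
    (nonempty_iff_ne_empty.2 hne)).1
  have levels := sum_card_superlevel_add_sum_le (by simp)
    (fun _ _ => h.symbolCount_insert_le) {s, s + 1}
  rw [h.sum_columnCount, sum_pair (by omega), sum_pair (by omega)] at levels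
  have := h.le_sum_symbolCount_add_two hS
  norm_num only at levels
  omega

theorem mod_ten_of_card_le_succ (h : IsPDA 5 K 2 A) (hS : Fintype.card S ≤ K + 1) :
    K % 10 = 0 ∨ K % 10 = 9 ∧ Fintype.card S = K + 1 := by
  obtain ⟨E₀, hE₀, hmin⟩ := exists_min_image (powersetCard 2 (univ : Finset (Fin 5)))
    (columnCount A) (powersetCard_nonempty.2 (by simp))
  replace hE₀ : #E₀ = 2 := (mem_powersetCard.1 hE₀).2
  have hm : ∀ E, #E = 2 → columnCount A E₀ ≤ columnCount A E := fun E hE =>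
    hmin E (mem_powersetCard.2 ⟨subset_univ _, hE⟩)
  have choose_five_two : (Fintype.card (Fin 5)).choose 2 = 10 := by decide
  rcases h.superlevel_eq_empty_or_card_eq_nine hS hE₀ le_rfl hm with hempty | hnine
  · have hK := sum_eq_of_superlevel_succ_eq_empty hm
      (subset_empty.1 (hempty ▸ superlevel_anti (Nat.le_succ _)))
    rw [h.sum_columnCount, hempty, card_empty, choose_five_two] at hK
    omega
  · have hK := sum_eq_of_superlevel_succ_eq_empty hm
      (h.superlevel_succ_eq_empty_of_card_eq_nine hS hE₀ le_rfl hnine)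
    rw [h.sum_columnCount, hnine, choose_five_two] at hK
    refine .inr ⟨by omega, ?_⟩
    have few_triples := h.card_superlevel_le_seven_of_card_eq_nine hE₀ le_rfl hnine
    have three_deficient : ¬ #(deficientSymbols 2 A) ≤ 2 := fun htwo => by
      have := h.card_superlevel_le_of_card_deficient_le_two (s := columnCount A E₀) hS htwo
      omega
    have := h.succ_mul_add_card_deficient_le rfl
    omega

end IsPDA

end LowerBound

/-! ### Constructions -/

section Constructions

variable {F K K₁ K₂ Z n n₁ n₂ : ℕ}

/-- There is an `(F, K, Z)`-PDA with an alphabet of size `n`, for which we take `Fin n`. -/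
def HasPDA (F K Z n : ℕ) : Prop :=
  ∃ A : Fin F → Fin K → Option (Fin n), IsPDA F K Z A

lemma IsPDA.of_map {S S' : Type} {A : Fin F → Fin K → Option S} {B : Fin F → Fin K → Option S'}
    (h : IsPDA F K Z A) (φ : S' → S) (hB : ∀ j k, (B j k).map φ = A j k) : IsPDA F K Z B := by
  have none_iff : ∀ j k, A j k = none ↔ B j k = none := fun j k => by
    rw [← hB, Option.map_eq_none_iff]
  obtain ⟨hZ, hcross⟩ := isPDA_iff.1 h
  refine isPDA_iff.2 ⟨fun k => ?_, fun j₁ k₁ j₂ k₂ t h₁ h₂ => ?_⟩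
  · simpa only [emptyRows, none_iff] using hZ k
  · simpa only [none_iff] using hcross j₁ k₁ j₂ k₂ (φ t) (by simp [← hB, h₁]) (by simp [← hB, h₂])

lemma IsPDA.hasPDA_of_cover {S : Type} {A : Fin F → Fin K → Option S} (h : IsPDA F K Z A)
    (φ : Fin n → S) (hφ : ∀ j k t, A j k = some t → ∃ i, φ i = t) : HasPDA F K Z n := by
  have lift : ∀ j k, ∃ b : Option (Fin n), b.map φ = A j k := fun j k => by
    cases hjk : A j k with
    | none => exact ⟨none, rfl⟩
    | some t =>
      obtain ⟨i, rfl⟩ := hφ j k t hjk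
      exact ⟨some i, rfl⟩
  choose B hB using lift
  exact ⟨B, h.of_map φ hB⟩

lemma HasPDA.append (h₁ : HasPDA F K₁ Z n₁) (h₂ : HasPDA F K₂ Z n₂) :
    HasPDA F (K₁ + K₂) Z (n₁ + n₂) := by
  obtain ⟨A, hA⟩ := h₁
  obtain ⟨B, hB⟩ := h₂
  obtain ⟨hAZ, hA⟩ := isPDA_iff.1 hA
  obtain ⟨hBZ, hB⟩ := isPDA_iff.1 hB
  let C : Fin F → Fin (K₁ + K₂) → Option (Fin n₁ ⊕ Fin n₂) := fun j =>
    Fin.append (fun k => (A j k).map Sum.inl) (fun k => (B j k).map Sum.inr)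
  have hC : IsPDA F (K₁ + K₂) Z C := by
    refine isPDA_iff.2 ⟨fun k => ?_, fun j₁ k₁ j₂ k₂ t => ?_⟩
    · induction k using Fin.addCases with
      | left k => simpa [emptyRows, C] using hAZ k
      | right k => simpa [emptyRows, C] using hBZ k
    · induction k₁ using Fin.addCases <;> induction k₂ using Fin.addCases <;>
        rcases t with t | t <;>
        simp only [C, Fin.append_left, Fin.append_right, Fin.castAdd_inj, Fin.natAdd_inj,
          Option.map_eq_some_iff, Option.map_eq_none_iff, Sum.inl.injEq, Sum.inr.injEq,
          reduceCtorEq, and_false, exists_false, exists_eq_right, IsEmpty.forall_iff, implies_true]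
      · exact hA _ _ _ _ t
      · exact hB _ _ _ _ t
  exact hC.hasPDA_of_cover finSumFinEquiv.symm fun _ _ t _ => finSumFinEquiv.symm.surjective t

lemma hasPDA_zero_columns : HasPDA F 0 Z 0 :=
  ⟨fun _ => Fin.elim0, isPDA_iff.2 ⟨fun k => k.elim0, fun _ k => k.elim0⟩⟩

lemma HasPDA.mul_add (h₁ : HasPDA F K₁ Z n₁) (h₂ : HasPDA F K₂ Z n₂) (q : ℕ) :
    HasPDA F (q * K₁ + K₂) Z (q * n₁ + n₂) := by
  induction q with
  | zero => simpa using h₂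
  | succ q ih => convert h₁.append ih using 1 <;> ring

-- The Maddah-Ali–Niesen array, with an arbitrary family of column types: the symbols are the
-- sets `insert j E` themselves.
lemma hasPDA_upShadow (𝓔 : Finset (Finset (Fin F))) (h𝓔 : ∀ E ∈ 𝓔, #E = Z) (hK : #𝓔 = K)
    (hn : #(∂⁺ 𝓔) = n) : HasPDA F K Z n := by
  let type (k : Fin K) : Finset (Fin F) := (𝓔.equivFinOfCardEq hK).symm k
  have type_mem (k : Fin K) : type k ∈ 𝓔 := ((𝓔.equivFinOfCardEq hK).symm k).2
  have type_injective : Function.Injective type :=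
    Subtype.val_injective.comp (𝓔.equivFinOfCardEq hK).symm.injective
  let A : Fin F → Fin K → Option (Finset (Fin F)) := fun j k =>
    if j ∈ type k then none else some (insert j (type k))
  have eq_none {j k} : A j k = none ↔ j ∈ type k := by simp [A]
  have eq_some {j k T} : A j k = some T ↔ j ∉ type k ∧ insert j (type k) = T := by simp [A]
  have hA : IsPDA F K Z A := by
    refine isPDA_iff.2 ⟨fun k => ?_, fun j₁ k₁ j₂ k₂ T h₁ h₂ => ?_⟩
    · simpa only [emptyRows, eq_none, filter_univ_mem] using h𝓔 _ (type_mem k)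
    obtain ⟨hj₁, rfl⟩ := eq_some.1 h₁
    obtain ⟨hj₂, heq⟩ := eq_some.1 h₂
    by_cases hj : j₁ = j₂
    · subst hj
      refine .inl ⟨rfl, type_injective ?_⟩
      rw [← erase_insert hj₁, ← erase_insert hj₂, heq]
    · have mem₁ : j₁ ∈ insert j₂ (type k₂) := heq ▸ mem_insert_self _ _
      have mem₂ : j₂ ∈ insert j₁ (type k₁) := heq ▸ mem_insert_self _ _
      exact .inr ⟨eq_none.2 (mem_of_mem_insert_of_ne mem₁ hj),
        eq_none.2 (mem_of_mem_insert_of_ne mem₂ (Ne.symm hj))⟩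
  refine hA.hasPDA_of_cover (fun i => ((∂⁺ 𝓔).equivFinOfCardEq hn).symm i) fun j k T hT => ?_
  have T_mem : T ∈ ∂⁺ 𝓔 := mem_upShadow_iff.2 ⟨type k, type_mem k, j, eq_some.1 hT⟩
  exact ⟨(∂⁺ 𝓔).equivFinOfCardEq hn ⟨T, T_mem⟩, by simp⟩

end Constructions

lemma hasPDA_five_one : HasPDA 5 1 2 3 :=
  hasPDA_upShadow {{0, 1}} (by decide) (by decide) (by decide)

lemma hasPDA_five_two : HasPDA 5 2 2 4 :=
  ⟨![![some 0, some 3],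
     ![none, some 2],
     ![some 1, none],
     ![some 2, none],
     ![none, some 1]], isPDA_iff.2 (by decide +kernel)⟩

lemma hasPDA_five_three : HasPDA 5 3 2 5 :=
  ⟨![![some 0, some 3, none],
     ![none, some 2, some 0],
     ![some 1, none, none],
     ![some 2, none, some 3],
     ![none, some 1, some 4]], isPDA_iff.2 (by decide +kernel)⟩

lemma hasPDA_five_four : HasPDA 5 4 2 6 :=
  ⟨![![some 5, some 0, none, some 2],
     ![some 4, some 3, some 2, none],
     ![none, some 1, some 5, none],
     ![some 1, none, some 0, some 3],
     ![none, none, none, some 4]], isPDA_iff.2 (by decide +kernel)⟩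

lemma hasPDA_five_five : HasPDA 5 5 2 7 :=
  ⟨![![none, none, some 0, some 2, some 4],
     ![none, none, some 1, some 3, some 5],
     ![some 0, some 3, none, none, some 6],
     ![some 1, some 4, none, some 6, none],
     ![some 2, some 5, some 6, none, none]], isPDA_iff.2 (by decide +kernel)⟩

lemma hasPDA_five_six : HasPDA 5 6 2 8 :=
  ⟨![![none, none, none, none, some 0, some 5],
     ![none, some 0, some 1, some 2, none, some 6],
     ![some 0, none, some 3, some 4, none, some 7],
     ![some 1, some 3, none, some 5, some 6, none],
     ![some 2, some 4, some 5, none, some 7, none]], isPDA_iff.2 (by decide +kernel)⟩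

lemma hasPDA_five_seven : HasPDA 5 7 2 9 :=
  hasPDA_upShadow (powersetCard 2 univ \ powersetCard 2 {0, 1, 2})
    (by decide) (by decide) (by decide)

lemma hasPDA_five_eight : HasPDA 5 8 2 10 :=
  hasPDA_upShadow (powersetCard 2 univ \ {{0, 1}, {0, 2}})
    (by decide) (by decide) (by decide)

lemma hasPDA_five_nine : HasPDA 5 9 2 10 :=
  hasPDA_upShadow ((powersetCard 2 univ).erase {0, 1}) (by decide) (by decide) (by decide)

lemma hasPDA_five_ten : HasPDA 5 10 2 10 :=
  hasPDA_upShadow (powersetCard 2 univ) (by decide) (by decide) (by decide)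

lemma hasPDA_five_of_lt_ten {r : ℕ} (hr : r < 10) :
    HasPDA 5 r 2 (if r = 0 then 0 else if r = 9 then 10 else r + 2) := by
  interval_cases r
  exacts [hasPDA_zero_columns, hasPDA_five_one, hasPDA_five_two, hasPDA_five_three,
    hasPDA_five_four, hasPDA_five_five, hasPDA_five_six, hasPDA_five_seven, hasPDA_five_eight,
    hasPDA_five_nine]

theorem hasPDA_five (K : ℕ) :
    HasPDA 5 K 2 (if K % 10 = 0 then K else if K % 10 = 9 then K + 1 else K + 2) := by
  convert hasPDA_five_ten.mul_add (hasPDA_five_of_lt_ten (K.mod_lt (by decide))) (K / 10) using 1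
  · exact (Nat.div_add_mod' K 10).symm
  · split_ifs <;> omega

theorem stmt_18 (K : ℕ) (hK : 0 < K) :
    sPDA 5 K 2 =
      if K % 10 = 0 then K
      else if K % 10 = 9 then K + 1
      else K + 2 := by
  refine le_antisymm (Nat.sInf_le (hasPDA_five K)) (le_csInf ⟨_, hasPDA_five K⟩ ?_)
  rintro n ⟨A, hA⟩
  have weight := hA.succ_mul_add_card_deficient_le rfl
  have residue := hA.mod_ten_of_card_le_succ
  rw [Fintype.card_fin] at weight residue
  split_ifs <;> omega
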